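/- Fix p ≥ 1 and a positive definite p×p real matrix Σ₀. If 1/3 ≤ ε < 1/2 and A > 3/2, then for all K with K² > A the kurtosis function g from the contaminated model is strictly monotone in s = u₁² on [0,1]: for any two unit vectors u, w ∈ ℝ^p with u₁² > w₁², the kurtosis of ⟨u, x⟩ under F = (1−ε)F₀ + ε δ_{K e₁} is strictly smaller than the kurtosis of ⟨w, x⟩ under F. -/

import Mathlib

/-!
By rotation invariance, every projection `⟪v, ·⟫` along a unit vector has the same symmetric law
under `F₀`, so the kurtosis under `F` is a rational function of `t = ⟪v, a⟫²`, where `a` is the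
contaminating point. After cross-multiplication, the difference of its values at `y` and `x` is a
positive multiple of `y - x` times a sum of three nonpositive terms; the first is strictly negative
as soon as the kurtosis under `F₀` exceeds `3ε`, and the last has the sign of `1 - 3ε`.
-/

open MeasureTheory
open scoped RealInnerProductSpace ENNReal

open ProbabilityTheory Set

section Kurtosis

variable {Ω Ω' : Type*} [MeasurableSpace Ω] [MeasurableSpace Ω'] {μ : Measure Ω} {ν : Measure Ω'}
  {X : Ω → ℝ} {Y : Ω' → ℝ}

/-- The (non-excess) kurtosis of a real random variable: its fourth central moment divided by the
square of its variance. It is `0` by convention when the variance vanishes. -/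
noncomputable def kurtosis (X : Ω → ℝ) (μ : Measure Ω) : ℝ :=
  centralMoment X 4 μ / centralMoment X 2 μ ^ 2

lemma kurtosis_eq_moment_div_of_integral_eq_zero (hX : μ[X] = 0) :
    kurtosis X μ = moment X 4 μ / moment X 2 μ ^ 2 := by
  simp [kurtosis, centralMoment, moment, hX]

lemma moment_two_pos_of_kurtosis_pos (hX : μ[X] = 0) (hκ : 0 < kurtosis X μ) :
    0 < moment X 2 μ := by
  have hm₂ : 0 ≤ moment X 2 μ := integral_nonneg fun ω ↦ sq_nonneg (X ω)
  refine hm₂.lt_of_ne' fun h ↦ hκ.ne' ?_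
  rw [kurtosis_eq_moment_div_of_integral_eq_zero hX, h, zero_pow two_ne_zero, div_zero]

lemma centralMoment_eq_of_identDistrib (h : IdentDistrib X Y μ ν) (n : ℕ) :
    centralMoment X n μ = centralMoment Y n ν := by
  simp only [centralMoment, h.integral_eq]
  exact (h.comp (u := fun x ↦ (x - ν[Y]) ^ n) (by fun_prop)).integral_eq

lemma kurtosis_eq_of_identDistrib (h : IdentDistrib X Y μ ν) : kurtosis X μ = kurtosis Y ν := by
  rw [kurtosis, kurtosis, centralMoment_eq_of_identDistrib h, centralMoment_eq_of_identDistrib h]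

lemma moment_eq_of_identDistrib (h : IdentDistrib X Y μ ν) (n : ℕ) :
    moment X n μ = moment Y n ν :=
  h.pow.integral_eq

lemma moment_eq_zero_of_identDistrib_neg (h : IdentDistrib X (-X) μ μ) {n : ℕ} (hn : Odd n) :
    moment X n μ = 0 := by
  have hneg : moment X n μ = -moment X n μ := by
    simpa [moment, hn.neg_pow, integral_neg] using moment_eq_of_identDistrib h n
  linarith

lemma integral_eq_zero_of_identDistrib_neg (h : IdentDistrib X (-X) μ μ) : μ[X] = 0 := by
  simpa only [moment_one] using moment_eq_zero_of_identDistrib_neg h odd_one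

lemma integrable_pow_of_memLp [IsFiniteMeasure μ] {m n : ℕ} (hX : MemLp X n μ) (hmn : m ≤ n) :
    Integrable (fun ω ↦ X ω ^ m) μ :=
  (integrable_norm_iff (hX.aestronglyMeasurable.pow m)).1 <| by
    simpa only [Pi.pow_apply, norm_pow] using
      (hX.mono_exponent (by exact_mod_cast hmn)).integrable_norm_pow'

lemma integral_sub_const_pow [IsFiniteMeasure μ] {n : ℕ} (hX : MemLp X n μ) (c : ℝ) :
    ∫ ω, (X ω - c) ^ n ∂μ =
      ∑ m ∈ Finset.range (n + 1), moment X m μ * (-c) ^ (n - m) * n.choose m := by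
  simp only [sub_eq_add_neg, add_pow]
  rw [integral_finsetSum _ fun m hm ↦ ((integrable_pow_of_memLp hX
    (Finset.mem_range_succ_iff.1 hm)).mul_const _).mul_const _]
  simp only [integral_mul_const, moment, Pi.pow_apply]

lemma moment_order_zero [IsProbabilityMeasure μ] : moment X 0 μ = 1 := by
  simp [moment]

lemma integral_sub_const_sq [IsProbabilityMeasure μ] (hX : MemLp X 2 μ) (hX₁ : μ[X] = 0) (c : ℝ) :
    ∫ ω, (X ω - c) ^ 2 ∂μ = moment X 2 μ + c ^ 2 := by
  rw [← moment_one] at hX₁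
  simp only [integral_sub_const_pow hX, Finset.sum_range_succ, Finset.sum_range_zero,
    moment_order_zero, hX₁, Nat.choose]
  ring

lemma integral_sub_const_pow_four [IsProbabilityMeasure μ] (hX : MemLp X 4 μ) (hX₁ : μ[X] = 0)
    (hX₃ : moment X 3 μ = 0) (c : ℝ) :
    ∫ ω, (X ω - c) ^ 4 ∂μ = moment X 4 μ + 6 * c ^ 2 * moment X 2 μ + c ^ 4 := by
  rw [← moment_one] at hX₁
  simp only [integral_sub_const_pow hX, Finset.sum_range_succ, Finset.sum_range_zero,
    moment_order_zero, hX₁, hX₃, Nat.choose]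
  push_cast
  ring

end Kurtosis

section Contamination

/-- The point-mass contamination model `(1 - ε) μ + ε δ_a`. The weights are truncated at `0`, so
this is a mixture only for `0 ≤ ε ≤ 1`. -/
noncomputable def contaminate {Ω : Type*} [MeasurableSpace Ω] (ε : ℝ) (a : Ω) (μ : Measure Ω) :
    Measure Ω :=
  ENNReal.ofReal (1 - ε) • μ + ENNReal.ofReal ε • Measure.dirac a

/-- The kurtosis, under contamination of weight `ε`, of a centered variable with second and fourth
moments `m₂` and `m₄` and vanishing third moment, as a function of the square `t` of its value at
the contaminating point. -/
noncomputable def contaminatedKurtosis (ε m₂ m₄ t : ℝ) : ℝ :=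
  (m₄ + 6 * ε ^ 2 * m₂ * t + ε * (1 - 3 * ε + 3 * ε ^ 2) * t ^ 2) /
    ((1 - ε) * (m₂ + ε * t) ^ 2)

variable {Ω : Type*} [MeasurableSpace Ω] [MeasurableSingletonClass Ω] {μ : Measure Ω}
  {ε : ℝ} {a : Ω} {X Y : Ω → ℝ}

lemma integral_contaminate {E : Type*} [NormedAddCommGroup E] [NormedSpace ℝ E] [CompleteSpace E]
    {f : Ω → E} (hε : ε ∈ Icc 0 1) (hf : Integrable f μ) :
    ∫ ω, f ω ∂(contaminate ε a μ) = (1 - ε) • ∫ ω, f ω ∂μ + ε • f a := by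
  rw [contaminate, integral_add_measure (hf.smul_measure ENNReal.ofReal_ne_top)
    ((integrable_dirac enorm_lt_top).smul_measure ENNReal.ofReal_ne_top), integral_smul_measure,
    integral_smul_measure, integral_dirac, ENNReal.toReal_ofReal (sub_nonneg.2 hε.2),
    ENNReal.toReal_ofReal hε.1]

variable [IsProbabilityMeasure μ]

lemma centralMoment_contaminate {n : ℕ} (hε : ε ∈ Icc 0 1) (hn : n ≠ 0) (hX : MemLp X n μ)
    (hX₁ : μ[X] = 0) :
    centralMoment X n (contaminate ε a μ) =
      (1 - ε) * ∫ ω, (X ω - ε * X a) ^ n ∂μ + ε * ((1 - ε) * X a) ^ n := by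
  have hmean : ∫ ω, X ω ∂(contaminate ε a μ) = ε * X a := by
    rw [integral_contaminate hε (hX.integrable (by exact_mod_cast Nat.one_le_iff_ne_zero.2 hn)),
      hX₁, smul_zero, zero_add, smul_eq_mul]
  have hdev : Integrable (fun ω ↦ (X ω - ε * X a) ^ n) μ :=
    integrable_pow_of_memLp (hX.sub (memLp_const _)) le_rfl
  simp only [centralMoment, Pi.pow_apply, Pi.sub_apply, hmean]
  rw [integral_contaminate hε hdev, smul_eq_mul, smul_eq_mul]
  ring

lemma centralMoment_two_contaminate (hε : ε ∈ Icc 0 1) (hX : MemLp X 2 μ) (hX₁ : μ[X] = 0) :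
    centralMoment X 2 (contaminate ε a μ) = (1 - ε) * (moment X 2 μ + ε * X a ^ 2) := by
  rw [centralMoment_contaminate hε two_ne_zero hX hX₁, integral_sub_const_sq hX hX₁]
  ring

lemma centralMoment_four_contaminate (hε : ε ∈ Icc 0 1) (hX : MemLp X 4 μ) (hX₁ : μ[X] = 0)
    (hX₃ : moment X 3 μ = 0) :
    centralMoment X 4 (contaminate ε a μ) =
      (1 - ε) * (moment X 4 μ + 6 * ε ^ 2 * moment X 2 μ * X a ^ 2 +
        ε * (1 - 3 * ε + 3 * ε ^ 2) * (X a ^ 2) ^ 2) := by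
  rw [centralMoment_contaminate hε four_ne_zero hX hX₁, integral_sub_const_pow_four hX hX₁ hX₃]
  ring

lemma kurtosis_contaminate (hε₀ : 0 ≤ ε) (hε₁ : ε < 1) (hX : MemLp X 4 μ) (hX₁ : μ[X] = 0)
    (hX₃ : moment X 3 μ = 0) :
    kurtosis X (contaminate ε a μ) =
      contaminatedKurtosis ε (moment X 2 μ) (moment X 4 μ) (X a ^ 2) := by
  have hX₂ : MemLp X 2 μ := hX.mono_exponent (by norm_num)
  rw [kurtosis, contaminatedKurtosis, centralMoment_two_contaminate ⟨hε₀, hε₁.le⟩ hX₂ hX₁,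
    centralMoment_four_contaminate ⟨hε₀, hε₁.le⟩ hX hX₁ hX₃, mul_pow, sq (1 - ε),
    mul_assoc (1 - ε) (1 - ε), mul_div_mul_left _ _ (sub_pos.2 hε₁).ne']

lemma strictAntiOn_contaminatedKurtosis {m₂ m₄ : ℝ} (hε₀ : 1 / 3 ≤ ε) (hε₁ : ε < 1)
    (hm₂ : 0 < m₂) (hm₄ : 3 * ε * m₂ ^ 2 < m₄) :
    StrictAntiOn (contaminatedKurtosis ε m₂ m₄) (Ici 0) := by
  intro x (hx : 0 ≤ x) y (hy : 0 ≤ y) hxy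
  have hε : 0 < ε := by linarith
  have hε' : 0 < 1 - ε := by linarith
  have hconst : 2 * ε * m₂ * (3 * ε * m₂ ^ 2 - m₄) < 0 :=
    mul_neg_of_pos_of_neg (mul_pos (mul_pos two_pos hε) hm₂) (by linarith)
  have hcoeff : (1 - 3 * ε + 3 * ε ^ 2) * m₂ ^ 2 ≤ ε * m₄ :=
    calc (1 - 3 * ε + 3 * ε ^ 2) * m₂ ^ 2 ≤ ε * (3 * ε * m₂ ^ 2) := by
          linear_combination 3 * mul_nonneg (sub_nonneg.2 hε₀) (sq_nonneg m₂)
      _ ≤ ε * m₄ := by gcongr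
  have hlinear : (x + y) * ε * ((1 - 3 * ε + 3 * ε ^ 2) * m₂ ^ 2 - ε * m₄) ≤ 0 :=
    mul_nonpos_of_nonneg_of_nonpos (by positivity) (sub_nonpos.2 hcoeff)
  have hbilinear : 2 * ε ^ 2 * m₂ * x * y * (1 - 3 * ε) ≤ 0 :=
    mul_nonpos_of_nonneg_of_nonpos (by positivity) (by linarith)
  have hprod : (1 - ε) * (y - x) * (2 * ε * m₂ * (3 * ε * m₂ ^ 2 - m₄) +
      (x + y) * ε * ((1 - 3 * ε + 3 * ε ^ 2) * m₂ ^ 2 - ε * m₄) +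
      2 * ε ^ 2 * m₂ * x * y * (1 - 3 * ε)) < 0 :=
    mul_neg_of_pos_of_neg (mul_pos hε' (sub_pos.2 hxy)) (by linarith)
  rw [contaminatedKurtosis, contaminatedKurtosis,
    div_lt_div_iff₀ (by positivity) (by positivity)]
  linear_combination hprod

lemma kurtosis_contaminate_lt_of_identDistrib (hX : MemLp X 4 μ) (hXneg : IdentDistrib X (-X) μ μ)
    (hXY : IdentDistrib X Y μ μ) (hε₀ : 1 / 3 ≤ ε) (hε₁ : ε < 1) (hκ : 3 * ε < kurtosis X μ)
    (ha : Y a ^ 2 < X a ^ 2) :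
    kurtosis X (contaminate ε a μ) < kurtosis Y (contaminate ε a μ) := by
  have hX₁ : μ[X] = 0 := integral_eq_zero_of_identDistrib_neg hXneg
  have hY₁ : μ[Y] = 0 := hXY.integral_eq ▸ hX₁
  have hX₃ : moment X 3 μ = 0 := moment_eq_zero_of_identDistrib_neg hXneg (by decide)
  have hY₃ : moment Y 3 μ = 0 := moment_eq_of_identDistrib hXY 3 ▸ hX₃
  have hm₂ : 0 < moment X 2 μ := moment_two_pos_of_kurtosis_pos hX₁ (by linarith)
  have hm₄ : 3 * ε * moment X 2 μ ^ 2 < moment X 4 μ := by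
    rwa [kurtosis_eq_moment_div_of_integral_eq_zero hX₁, lt_div_iff₀ (by positivity)] at hκ
  rw [kurtosis_contaminate (by linarith) hε₁ hX hX₁ hX₃,
    kurtosis_contaminate (by linarith) hε₁ (hXY.memLp_snd hX) hY₁ hY₃,
    ← moment_eq_of_identDistrib hXY, ← moment_eq_of_identDistrib hXY]
  exact strictAntiOn_contaminatedKurtosis hε₀ hε₁ hm₂ hm₄
    (mem_Ici.2 (sq_nonneg _)) (mem_Ici.2 (sq_nonneg _)) ha

end Contamination

section RotationInvariant

variable {E : Type*} [NormedAddCommGroup E] [InnerProductSpace ℝ E] [MeasurableSpace E]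
  {μ : Measure E}

/-- A measure is rotation invariant if every linear isometry of the space onto itself, reflections
included, preserves it. -/
def IsRotationInvariant (μ : Measure E) : Prop :=
  ∀ T : E ≃ₗᵢ[ℝ] E, μ.map T = μ

variable [BorelSpace E]

lemma memLp_inner_of_integrable_norm_pow {n : ℕ} (hn : n ≠ 0)
    (hμ : Integrable (fun x ↦ ‖x‖ ^ n) μ) (v : E) : MemLp (fun x ↦ ⟪v, x⟫) n μ := by
  rw [← integrable_norm_rpow_iff (by fun_prop) (by exact_mod_cast hn) (ENNReal.natCast_ne_top n)]
  simp only [ENNReal.toReal_natCast, Real.rpow_natCast]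
  refine (hμ.const_mul (‖v‖ ^ n)).mono' (by fun_prop) (.of_forall fun x ↦ ?_)
  rw [norm_pow, norm_norm, ← mul_pow]
  gcongr
  exact norm_inner_le_norm v x

namespace IsRotationInvariant

lemma identDistrib_comp (hμ : IsRotationInvariant μ) (T : E ≃ₗᵢ[ℝ] E) {β : Type*}
    [MeasurableSpace β] {f : E → β} (hf : Measurable f) : IdentDistrib f (f ∘ T) μ μ where
  aemeasurable_fst := hf.aemeasurable
  aemeasurable_snd := (hf.comp T.continuous.measurable).aemeasurable
  map_eq := by rw [← Measure.map_map hf T.continuous.measurable, hμ T]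

lemma identDistrib_inner (hμ : IsRotationInvariant μ) {u v : E} (huv : ‖u‖ = ‖v‖) :
    IdentDistrib (fun x ↦ ⟪u, x⟫) (fun x ↦ ⟪v, x⟫) μ μ := by
  let T : E ≃ₗᵢ[ℝ] E := (ℝ ∙ (v - u))ᗮ.reflection
  have hT : T v = u := Submodule.reflection_sub huv.symm
  have hcomp : (fun x ↦ ⟪u, x⟫) ∘ T = fun x ↦ ⟪v, x⟫ := by
    ext x
    rw [Function.comp_apply, ← hT, T.inner_map_map]
  exact hcomp ▸ hμ.identDistrib_comp T (by fun_prop)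

lemma identDistrib_inner_neg (hμ : IsRotationInvariant μ) (v : E) :
    IdentDistrib (fun x ↦ ⟪v, x⟫) (-fun x ↦ ⟪v, x⟫) μ μ := by
  have hcomp : (fun x ↦ ⟪v, x⟫) ∘ LinearIsometryEquiv.neg ℝ = -fun x ↦ ⟪v, x⟫ := by
    ext x
    exact inner_neg_right v x
  exact hcomp ▸ hμ.identDistrib_comp (LinearIsometryEquiv.neg ℝ) (by fun_prop)

lemma kurtosis_inner (hμ : IsRotationInvariant μ) (v : E) :
    kurtosis (fun x ↦ ⟪v, x⟫) μ = (∫ x, ⟪v, x⟫ ^ 4 ∂μ) / (∫ x, ⟪v, x⟫ ^ 2 ∂μ) ^ 2 :=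
  kurtosis_eq_moment_div_of_integral_eq_zero
    (integral_eq_zero_of_identDistrib_neg (hμ.identDistrib_inner_neg v))

end IsRotationInvariant

end RotationInvariant

theorem contaminated_kurtosis_strict_monotone_general {E : Type*} [NormedAddCommGroup E]
    [InnerProductSpace ℝ E] [MeasurableSpace E] [BorelSpace E] {F₀ : Measure E}
    [IsProbabilityMeasure F₀] (hrot : IsRotationInvariant F₀)
    (hmom : Integrable (fun x ↦ ‖x‖ ^ 4) F₀) {ε : ℝ} (hε₀ : 1 / 3 ≤ ε) (hε₁ : ε < 1)
    {e : E} (he : 3 * ε < kurtosis (fun x ↦ ⟪e, x⟫) F₀) {a u w : E} (hu : ‖u‖ = ‖e‖)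
    (hw : ‖w‖ = ‖e‖) (huw : ⟪w, a⟫ ^ 2 < ⟪u, a⟫ ^ 2) :
    kurtosis (fun x ↦ ⟪u, x⟫) (contaminate ε a F₀) <
      kurtosis (fun x ↦ ⟪w, x⟫) (contaminate ε a F₀) := by
  have hκ : 3 * ε < kurtosis (fun x ↦ ⟪u, x⟫) F₀ := by
    rwa [kurtosis_eq_of_identDistrib (hrot.identDistrib_inner hu)]
  exact kurtosis_contaminate_lt_of_identDistrib
    (memLp_inner_of_integrable_norm_pow four_ne_zero hmom u) (hrot.identDistrib_inner_neg u)
    (hrot.identDistrib_inner (hu.trans hw.symm)) hε₀ hε₁ hκ huw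

/-- Fix `p ≥ 1` and a positive definite `Σ₀`. Under the point-mass contaminated model
`F = (1−ε)F₀ + ε δ_{K e₁}` with `1/3 ≤ ε < 1/2`, `A > 3/2` and `K² > A`, the kurtosis of
the projections is strictly monotone in `s = u₁²` on `[0, 1]`: for unit vectors `u, w`
with `u₁² > w₁²`, the kurtosis of `⟪u, x⟫` under `F` is strictly smaller than the
kurtosis of `⟪w, x⟫` under `F`. -/
theorem contaminated_kurtosis_strict_monotone {p : ℕ} (hp : 0 < p)
    (Sig₀ : Matrix (Fin p) (Fin p) ℝ) (hSig₀ : Sig₀.PosDef)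
    (F₀ : Measure (EuclideanSpace ℝ (Fin p))) [IsProbabilityMeasure F₀]
    (hrot : ∀ T : EuclideanSpace ℝ (Fin p) ≃ₗᵢ[ℝ] EuclideanSpace ℝ (Fin p),
      Measure.map (⇑T) F₀ = F₀)
    (hmom : Integrable (fun x => ‖x‖ ^ 4) F₀)
    (hcov : ∫ x, (x ⟨0, hp⟩) ^ 2 ∂F₀ = 1)
    (A : ℝ) (hA : A = ∫ x, (x ⟨0, hp⟩) ^ 4 ∂F₀) (hA2 : 3 / 2 < A)
    (ε K : ℝ) (hε3 : 1 / 3 ≤ ε) (hε2 : ε < 1 / 2) (hK : 0 < K) (hKA : A < K ^ 2)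
    (F : Measure (EuclideanSpace ℝ (Fin p)))
    (hF : F = ENNReal.ofReal (1 - ε) • F₀ +
      ENNReal.ofReal ε • Measure.dirac (K • EuclideanSpace.single (⟨0, hp⟩ : Fin p) 1))
    (kurt : EuclideanSpace ℝ (Fin p) → ℝ)
    (hkurt : ∀ v, kurt v =
      (∫ x, (⟪v, x⟫ - ∫ y, ⟪v, y⟫ ∂F) ^ 4 ∂F) /
        (∫ x, (⟪v, x⟫ - ∫ y, ⟪v, y⟫ ∂F) ^ 2 ∂F) ^ 2) :
    ∀ u w : EuclideanSpace ℝ (Fin p), ‖u‖ = 1 → ‖w‖ = 1 →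
      w ⟨0, hp⟩ ^ 2 < u ⟨0, hp⟩ ^ 2 → kurt u < kurt w := by
  intro u w hu hw huw
  set e : EuclideanSpace ℝ (Fin p) := EuclideanSpace.single ⟨0, hp⟩ 1 with he
  have hinv : IsRotationInvariant F₀ := hrot
  have hcoord (v : EuclideanSpace ℝ (Fin p)) : ⟪e, v⟫ = v ⟨0, hp⟩ := by
    simp [he, EuclideanSpace.inner_single_left]
  have he_norm : ‖e‖ = 1 := by simp [he]
  have he_kurt : kurtosis (fun x ↦ ⟪e, x⟫) F₀ = A := by
    rw [hinv.kurtosis_inner]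
    simp only [hcoord, hcov, ← hA, one_pow, div_one]
  have hlt : ⟪w, K • e⟫ ^ 2 < ⟪u, K • e⟫ ^ 2 := by
    simp only [inner_smul_right, real_inner_comm e, hcoord, mul_pow]
    gcongr
  rw [hkurt, hkurt, hF]
  exact contaminated_kurtosis_strict_monotone_general hinv hmom hε3 (by linarith) (by linarith)
    (hu.trans he_norm.symm) (hw.trans he_norm.symm) hlt
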